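/- Let m ≥ 2, r ≥ 1 and q ≥ 1 be integers. The group T_{r,m} contains an element of order q if and only if gcd(m−1, q) divides r. -/

import Mathlib

/-!
The integer `m` is congruent to `1` modulo `m - 1`, so all slopes are invisible modulo the ideal
`I = (m - 1)ℤ[1/m]` of `ℤ[1/m]`, and this gives an obstruction in one direction and a count of
intervals in the other.

*Necessity.* If `F` lifts an element of `T_{r,m}` then `F x ≡ x + F 0` modulo `I` for every
`x ∈ ℤ[1/m]` (`IsPLmLift.sub_sub_mem`), because on each affine piece an increment is multiplied by
a power of `m`. If the element has order `q`, then `F^q` is the translation by `k r` for one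
integer `k`, and `k` is prime to `q`: for a common divisor `d`, the commuting increasing maps
`F^(q/d)` and `x ↦ x + (k/d) r` have the same `d`-th iterate, hence coincide
(`exists_coprime_iterate`). Evaluating at `0` gives `q F(0) ≡ k r` modulo `I`; since
`gcd (m - 1, q)` is prime to both `m` and `k`, it divides `r`.

*Sufficiency.* If `gcd (m - 1, q)` divides `r`, some `N = r + j (m - 1)` is a multiple of `q`, say
`N = q M`. Splitting `j` times an interval into `m` equal parts cuts the circle into `N` intervals
whose lengths are powers of `m` (`exists_lengths`), and sending each interval affinely to
the one that is `M` places further on is an element of order `q`.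
-/

open Filter Topology

/-- The set `ℤ[1/m] = {N·m^s : N, s ∈ ℤ}` as a subset of `ℝ`. -/
def ZInvM (m : ℕ) : Set ℝ := {x : ℝ | ∃ N s : ℤ, x = (N : ℝ) * (m : ℝ) ^ s}

/-- `F : ℝ → ℝ` is a lift of an orientation-preserving `PL_m` homeomorphism from the
circle `ℝ/rℤ` to the circle `ℝ/r'ℤ`: it is strictly increasing, commutes appropriately
with the translations, and is affine on the pieces of a finite subdivision
`0 = a₀ < a₁ < ... < aₙ = r` of `[0, r]`, with slopes powers of `m`, breakpoints in
`ℤ[1/m]` and images of breakpoints in `ℤ[1/m]`. -/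
def IsPLmLift (m : ℕ) (r r' : ℝ) (F : ℝ → ℝ) : Prop :=
  StrictMono F ∧ (∀ x : ℝ, F (x + r) = F x + r') ∧
    ∃ (n : ℕ) (a : Fin (n + 1) → ℝ),
      StrictMono a ∧ a 0 = 0 ∧ a (Fin.last n) = r ∧
      (∀ i, a i ∈ ZInvM m) ∧ (∀ i, F (a i) ∈ ZInvM m) ∧
      ∀ i : Fin n, ∃ (s : ℤ) (β : ℝ),
        ∀ x ∈ Set.Icc (a i.castSucc) (a i.succ), F x = (m : ℝ) ^ s * x + β

/-- Membership in the Brown–Thompson group `T_{r,m}`, viewed inside the permutations of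
the circle `ℝ/rℤ`: `f` is induced by a `PL_m` lift. -/
def InT (r m : ℕ) (f : Equiv.Perm (AddCircle (r : ℝ))) : Prop :=
  ∃ F : ℝ → ℝ, IsPLmLift m r r F ∧ ∀ x : ℝ, f ↑x = ↑(F x)

/-! ### Arithmetic in `ℤ[1/m]` -/

lemma mem_ZInvM_iff {m : ℕ} (hm : 2 ≤ m) (x : ℝ) :
    x ∈ ZInvM m ↔ ∃ (N : ℤ) (e : ℕ), x * (m : ℝ) ^ e = N := by
  have hm0 : (m : ℝ) ≠ 0 := by positivity
  constructor
  · rintro ⟨N, s, rfl⟩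
    obtain ⟨e, rfl | rfl⟩ := s.eq_nat_or_neg
    · exact ⟨N * m ^ e, 0, by push_cast; simp⟩
    · exact ⟨N, e, by simp [hm0]⟩
  · rintro ⟨N, e, h⟩
    refine ⟨N, -(e : ℤ), ?_⟩
    rw [← h, zpow_neg, zpow_natCast]
    field_simp

/-- `ℤ[1/m]` as a subring of `ℝ`, with `ZInvM m` as its underlying set. -/
def zInvSubring (m : ℕ) (hm : 2 ≤ m) : Subring ℝ where
  carrier := ZInvM m
  zero_mem' := ⟨0, 0, by simp⟩
  one_mem' := ⟨1, 0, by simp⟩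
  add_mem' := by
    intro x y hx hy
    rw [mem_ZInvM_iff hm] at *
    obtain ⟨N, e, h⟩ := hx
    obtain ⟨N', e', h'⟩ := hy
    refine ⟨N * m ^ e' + N' * m ^ e, e + e', ?_⟩
    push_cast
    rw [← h, ← h']
    ring
  mul_mem' := by
    intro x y hx hy
    rw [mem_ZInvM_iff hm] at *
    obtain ⟨N, e, h⟩ := hx
    obtain ⟨N', e', h'⟩ := hy
    refine ⟨N * N', e + e', ?_⟩
    push_cast
    rw [← h, ← h']
    ring
  neg_mem' := by
    rintro x ⟨N, s, rfl⟩
    exact ⟨-N, s, by push_cast; ring⟩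

lemma zpow_mem_zInvSubring {m : ℕ} (hm : 2 ≤ m) (s : ℤ) : (m : ℝ) ^ s ∈ zInvSubring m hm :=
  ⟨1, s, by simp⟩

/-- The ideal `(m - 1)ℤ[1/m]`, as an additive subgroup of `ℝ`. -/
def predIdeal (m : ℕ) (hm : 2 ≤ m) : AddSubgroup ℝ where
  carrier := {x | ∃ z ∈ zInvSubring m hm, x = ((m : ℝ) - 1) * z}
  zero_mem' := ⟨0, zero_mem _, by simp⟩
  add_mem' := by
    rintro _ _ ⟨z, hz, rfl⟩ ⟨w, hw, rfl⟩
    exact ⟨z + w, add_mem hz hw, by ring⟩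
  neg_mem' := by
    rintro _ ⟨z, hz, rfl⟩
    exact ⟨-z, neg_mem hz, by ring⟩

lemma mem_zInvSubring_of_mem_predIdeal {m : ℕ} {hm : 2 ≤ m} {x : ℝ} (hx : x ∈ predIdeal m hm) :
    x ∈ zInvSubring m hm := by
  obtain ⟨z, hz, rfl⟩ := hx
  exact mul_mem (sub_mem (natCast_mem _ m) (one_mem _)) hz

lemma mul_mem_predIdeal {m : ℕ} {hm : 2 ≤ m} {x y : ℝ} (hx : x ∈ predIdeal m hm)
    (hy : y ∈ zInvSubring m hm) : x * y ∈ predIdeal m hm := by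
  obtain ⟨z, hz, rfl⟩ := hx
  exact ⟨z * y, mul_mem hz hy, by ring⟩

lemma zpow_sub_one_mem_predIdeal {m : ℕ} (hm : 2 ≤ m) (s : ℤ) :
    (m : ℝ) ^ s - 1 ∈ predIdeal m hm := by
  have hm0 : (m : ℝ) ≠ 0 := by positivity
  have key : ∀ e : ℕ, (m : ℝ) ^ e - 1 ∈ predIdeal m hm := fun e =>
    ⟨∑ i ∈ Finset.range e, (m : ℝ) ^ i,
      sum_mem fun i _ => pow_mem (natCast_mem _ m) i, (mul_geom_sum _ _).symm⟩
  obtain ⟨e, rfl | rfl⟩ := s.eq_nat_or_neg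
  · simpa using key e
  · have h := neg_mem (mul_mem_predIdeal (key e) (zpow_mem_zInvSubring hm (-(e : ℤ))))
    convert h using 1
    rw [zpow_neg, zpow_natCast]
    field_simp
    ring

/-! ### Elements of order `q` force the divisibility -/

/-- Periodicity up to translation, iterated over integer multiples of the period. -/
lemma map_add_int_mul {F : ℝ → ℝ} {r : ℝ} (h : ∀ x, F (x + r) = F x + r) (k : ℤ) (x : ℝ) :
    F (x + k * r) = F x + k * r := by
  induction k with
  | zero => simp
  | succ i ih =>
    have := h (x + (i : ℤ) * r)
    rw [ih] at this
    push_cast at *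
    rw [show x + (i + 1) * r = x + i * r + r by ring, this]
    ring
  | pred i ih =>
    have := h (x + ((-(i : ℤ) - 1 : ℤ) : ℝ) * r)
    push_cast at *
    rw [show x + (-i - 1) * r + r = x + -i * r by ring, ih] at this
    linarith

lemma iterate_add_period {F : ℝ → ℝ} {r : ℝ} (h : ∀ x, F (x + r) = F x + r) (n : ℕ) (x : ℝ) :
    F^[n] (x + r) = F^[n] x + r := by
  induction n generalizing x with
  | zero => rfl
  | succ n ih => rw [Function.iterate_succ_apply, Function.iterate_succ_apply, h, ih]

/-- A lift acts on `ℤ[1/m]` as the translation by `F 0`, modulo `(m - 1)ℤ[1/m]`. -/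
lemma IsPLmLift.sub_sub_mem {m r : ℕ} (hm : 2 ≤ m) (hr : 1 ≤ r) {F : ℝ → ℝ}
    (hF : IsPLmLift m r r F) {x : ℝ} (hx : x ∈ zInvSubring m hm) :
    F x - x - F 0 ∈ predIdeal m hm := by
  obtain ⟨-, hper, n, a, ha, ha0, han, haZ, -, haff⟩ := hF
  have key : ∀ i : Fin (n + 1), ∀ x ∈ zInvSubring m hm, 0 ≤ x → x ≤ a i →
      F x - x - F 0 ∈ predIdeal m hm := by
    intro i
    induction i using Fin.induction with
    | zero =>
      intro x _ h0 h1
      have : x = 0 := le_antisymm (ha0 ▸ h1) h0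
      simp [this, zero_mem]
    | succ i ih =>
      intro x hx h0 h1
      rcases le_or_gt x (a i.castSucc) with h | h
      · exact ih x hx h0 h
      · obtain ⟨s, β, hs⟩ := haff i
        have e1 := hs x ⟨h.le, h1⟩
        have e2 := hs (a i.castSucc) ⟨le_rfl, (ha i.castSucc_lt_succ).le⟩
        have h3 := ih (a i.castSucc) (haZ _) (ha0 ▸ ha.monotone (Fin.zero_le _)) le_rfl
        have h4 := mul_mem_predIdeal (zpow_sub_one_mem_predIdeal hm s)
          (sub_mem hx (show a i.castSucc ∈ zInvSubring m hm from haZ _))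
        convert add_mem h3 h4 using 1
        rw [e1, e2]
        ring
  have hr0 : (0 : ℝ) < r := by positivity
  set k : ℤ := ⌊x / r⌋ with hk
  have h1 : (k : ℝ) * r ≤ x := (le_div_iff₀ hr0).1 (Int.floor_le _)
  have h2 : x < ((k : ℝ) + 1) * r := (div_lt_iff₀ hr0).1 (Int.lt_floor_add_one _)
  have h := key (Fin.last n) (x - k * r)
    (sub_mem hx (mul_mem (intCast_mem _ k) (natCast_mem _ r))) (by linarith)
    (by rw [han]; linarith)
  have h3 := map_add_int_mul hper k (x - k * r)
  rw [sub_add_cancel] at h3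
  convert h using 1
  rw [h3]
  ring

lemma IsPLmLift.iterate_zero_mem {m r : ℕ} (hm : 2 ≤ m) (hr : 1 ≤ r) {F : ℝ → ℝ}
    (hF : IsPLmLift m r r F) (n : ℕ) :
    F^[n] 0 ∈ zInvSubring m hm ∧ F^[n] 0 - n * F 0 ∈ predIdeal m hm := by
  have h0 : F 0 ∈ zInvSubring m hm := by
    obtain ⟨-, -, n, a, -, ha0, -, -, haF, -⟩ := hF
    exact ha0 ▸ haF 0
  induction n with
  | zero => simp [zero_mem]
  | succ n ih =>
    have h1 := hF.sub_sub_mem hm hr ih.1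
    have h2 : F^[n + 1] 0 - (n + 1 : ℕ) * F 0 ∈ predIdeal m hm := by
      convert add_mem h1 ih.2 using 1
      rw [Function.iterate_succ_apply']
      push_cast
      ring
    refine ⟨?_, h2⟩
    have := add_mem (mem_zInvSubring_of_mem_predIdeal h2)
      (mul_mem (natCast_mem _ (n + 1)) h0)
    simpa using this

/-- Two reals have the same image in the circle exactly when they differ by a multiple of the
period. -/
lemma coe_eq_coe_iff_exists {r x y : ℝ} :
    (x : AddCircle r) = y ↔ ∃ j : ℤ, y = x + j * r := by
  rw [eq_comm, ← sub_eq_zero, ← AddCircle.coe_sub, AddCircle.coe_eq_zero_iff]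
  refine exists_congr fun j => ?_
  rw [zsmul_eq_mul, eq_sub_iff_add_eq, add_comm, eq_comm]

lemma pow_apply_coe {r : ℝ} {f : Equiv.Perm (AddCircle r)} {F : ℝ → ℝ}
    (h : ∀ x : ℝ, f ↑x = ↑(F x)) (n : ℕ) (x : ℝ) : (f ^ n) ↑x = ↑(F^[n] x) := by
  induction n with
  | zero => rfl
  | succ n ih => rw [pow_succ', Equiv.Perm.mul_apply, ih, h, Function.iterate_succ_apply']

/-- An increasing lift of the identity of the circle is a translation by a multiple of the
period: the multiple does not depend on the point. -/
lemma eq_add_of_lift_id {H : ℝ → ℝ} {r : ℝ} (hr : 0 < r) (hH : StrictMono H)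
    (hper : ∀ x, H (x + r) = H x + r) (hid : ∀ x, ∃ j : ℤ, H x = x + j * r) :
    ∃ k : ℤ, ∀ x, H x = x + k * r := by
  obtain ⟨k, hk⟩ := hid 0
  refine ⟨k, fun x => ?_⟩
  have main : ∀ y, 0 ≤ y → y < r → H y = y + k * r := by
    intro y h0 h1
    obtain ⟨j, hj⟩ := hid y
    have e1 := hH.monotone h0
    have e2 := hH h1
    have e3 := hper 0
    rw [zero_add] at e3
    have hjk : j ≤ k := by
      have : (j : ℝ) * r < (k + 1) * r := by linarith
      exact Int.lt_add_one_iff.1 (by exact_mod_cast lt_of_mul_lt_mul_right this hr.le)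
    have hkj : k ≤ j := by
      have : (k : ℝ) * r < (j + 1) * r := by linarith
      exact Int.lt_add_one_iff.1 (by exact_mod_cast lt_of_mul_lt_mul_right this hr.le)
    rw [hj, le_antisymm hjk hkj]
  set l : ℤ := ⌊x / r⌋ with hl
  have h1 : (l : ℝ) * r ≤ x := (le_div_iff₀ hr).1 (Int.floor_le _)
  have h2 : x < ((l : ℝ) + 1) * r := (div_lt_iff₀ hr).1 (Int.lt_floor_add_one _)
  have h3 := map_add_int_mul hper l (x - l * r)
  rw [sub_add_cancel, main (x - l * r) (by linarith) (by linarith)] at h3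
  linarith

/-- The rotation number of a circle map of finite order, in units of a full turn, is a fraction
whose reduced denominator is the order. -/
lemma exists_coprime_iterate {r : ℝ} (hr : 0 < r) {f : Equiv.Perm (AddCircle r)} {F : ℝ → ℝ}
    (hF : StrictMono F) (hper : ∀ x, F (x + r) = F x + r) (hf : ∀ x : ℝ, f ↑x = ↑(F x))
    (hq : 0 < orderOf f) :
    ∃ k : ℤ, Int.gcd k (orderOf f) = 1 ∧ F^[orderOf f] 0 = k * r := by
  obtain ⟨k, hk⟩ := eq_add_of_lift_id hr (hF.iterate (orderOf f))
    (iterate_add_period hper _) (fun x => by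
      have h := pow_apply_coe hf (orderOf f) x
      rw [pow_orderOf_eq_one, Equiv.Perm.one_apply] at h
      exact coe_eq_coe_iff_exists.1 h)
  refine ⟨k, ?_, by simpa using hk 0⟩
  set d := Int.gcd k (orderOf f) with hd
  have hd0 : 0 < d := Int.gcd_pos_of_ne_zero_right _ (by exact_mod_cast hq.ne')
  obtain ⟨k', hk'⟩ : (d : ℤ) ∣ k := Int.gcd_dvd_left ..
  obtain ⟨q', hq'⟩ : d ∣ orderOf f := by exact_mod_cast Int.gcd_dvd_right k (orderOf f : ℤ)
  have hG : ∀ x, F^[q'] x = x + k' * r := by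
    intro x
    have hcomm : Function.Commute F^[q'] (fun y => y + k' * r) := fun y =>
      map_add_int_mul (iterate_add_period hper q') k' y
    have hg : StrictMono (fun y : ℝ => y + k' * r) := fun _ _ h => by simpa using h
    refine (hcomm.iterate_pos_eq_iff_map_eq (hF.iterate q').monotone hg hd0).1 ?_
    rw [← Function.iterate_mul, mul_comm q' d, ← hq', hk x, add_right_iterate]
    rw [hk']
    push_cast
    simp [mul_assoc]
  have hone : f ^ q' = 1 := by
    ext y
    induction y using QuotientAddGroup.induction_on with
    | H x =>
      have h := pow_apply_coe hf q' x
      rw [hG] at h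
      rw [Equiv.Perm.one_apply]
      refine h.trans ?_
      exact (coe_eq_coe_iff_exists.2 ⟨k', rfl⟩).symm
  have hq0 : 0 < q' := Nat.pos_of_mul_pos_left (hq' ▸ hq)
  have hdvd := Nat.le_of_dvd hq0 (orderOf_dvd_of_pow_eq_one hone)
  rw [hq'] at hdvd
  nlinarith

/-- An integer in the ideal generated by `m - 1` and `q` in `ℤ[1/m]` is divisible by
`gcd (m - 1, q)`: clear denominators and use that this gcd is prime to `m`. -/
lemma gcd_dvd_of_mem_predIdeal {m : ℕ} (hm : 2 ≤ m) {q : ℕ} {b : ℤ} {c : ℝ}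
    (hc : c ∈ zInvSubring m hm) (h : b - q * c ∈ predIdeal m hm) :
    (Nat.gcd (m - 1) q : ℤ) ∣ b := by
  obtain ⟨z, hz, hz'⟩ := h
  obtain ⟨N, e, hN⟩ := (mem_ZInvM_iff hm c).1 hc
  obtain ⟨N', e', hN'⟩ := (mem_ZInvM_iff hm z).1 hz
  have hint : b * (m : ℤ) ^ (e + e') = q * (N * m ^ e') + ((m : ℤ) - 1) * (N' * m ^ e) := by
    have : (b : ℝ) * (m : ℝ) ^ (e + e') = q * (N * m ^ e') + ((m : ℝ) - 1) * (N' * m ^ e) := by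
      rw [← hN, ← hN', show (b : ℝ) = q * c + (m - 1) * z by linarith]
      ring
    exact_mod_cast this
  have hg1 : (Nat.gcd (m - 1) q : ℤ) ∣ (m : ℤ) - 1 := by
    have := Int.natCast_dvd_natCast.2 (Nat.gcd_dvd_left (m - 1) q)
    rwa [Nat.cast_sub (by omega), Nat.cast_one] at this
  have hg2 : (Nat.gcd (m - 1) q : ℤ) ∣ q := Int.natCast_dvd_natCast.2 (Nat.gcd_dvd_right _ _)
  have hcop : IsCoprime (Nat.gcd (m - 1) q : ℤ) ((m : ℤ) ^ (e + e')) := by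
    refine IsCoprime.pow_right (IsCoprime.of_isCoprime_of_dvd_left ?_ hg1)
    exact ⟨-1, 1, by ring⟩
  refine hcop.dvd_of_dvd_mul_right ?_
  rw [hint]
  exact dvd_add (hg2.mul_right _) (hg1.mul_right _)

theorem gcd_dvd_of_order {m r : ℕ} (hm : 2 ≤ m) (hr : 1 ≤ r)
    {f : Equiv.Perm (AddCircle (r : ℝ))} (hf : InT r m f) (hq : 1 ≤ orderOf f) :
    Nat.gcd (m - 1) (orderOf f) ∣ r := by
  obtain ⟨F, hF, hfF⟩ := hf
  obtain ⟨k, hk, hk0⟩ := exists_coprime_iterate (by positivity) hF.1 hF.2.1 hfF hq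
  have h1 := (hF.iterate_zero_mem hm hr (orderOf f)).2
  have h0 := (hF.iterate_zero_mem hm hr 1).1
  rw [hk0] at h1
  have h2 := gcd_dvd_of_mem_predIdeal hm (b := k * r) (q := orderOf f) h0 (by
    push_cast; simpa using h1)
  have hcop : IsCoprime (Nat.gcd (m - 1) (orderOf f) : ℤ) k :=
    IsCoprime.of_isCoprime_of_dvd_left (Int.isCoprime_iff_gcd_eq_one.2 hk).symm
      (Int.natCast_dvd_natCast.2 (Nat.gcd_dvd_right _ _))
  exact_mod_cast hcop.dvd_of_dvd_mul_left h2

/-! ### Construction of an element of order `q` -/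

/-- `[0, r]` can be cut into `r + j (m - 1)` consecutive intervals whose lengths are powers
of `m`: each induction step cuts the last interval into `m` equal parts. -/
lemma exists_lengths {m r : ℕ} (hm : 2 ≤ m) (hr : 1 ≤ r) (j : ℕ) :
    ∃ L : ℕ → ℤ, ∑ i ∈ Finset.range (r + j * (m - 1)), (m : ℝ) ^ L i = r := by
  have hm0 : (m : ℝ) ≠ 0 := by positivity
  induction j with
  | zero => exact ⟨fun _ => 0, by simp⟩
  | succ j ih =>
    obtain ⟨L, hL⟩ := ih
    obtain ⟨n, hn⟩ : ∃ n, r + j * (m - 1) = n + 1 := ⟨r + j * (m - 1) - 1, by omega⟩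
    refine ⟨fun i => if i < n then L i else L n - 1, ?_⟩
    have h2 : r + (j + 1) * (m - 1) = n + m := by
      rw [add_mul, one_mul]; omega
    rw [hn, Finset.sum_range_succ] at hL
    rw [h2, Finset.sum_range_add, ← hL]
    congr 1
    · exact Finset.sum_congr rfl fun i hi => by simp [Finset.mem_range.1 hi]
    · simp only [Nat.not_lt.2 (Nat.le_add_right _ _), if_false, Finset.sum_const,
        Finset.card_range, nsmul_eq_mul, zpow_sub_one₀ hm0]
      field_simp

lemma exists_multiple {m r q : ℕ} (hr : 1 ≤ r) (hq : 1 ≤ q)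
    (h : Nat.gcd (m - 1) q ∣ r) : ∃ j M : ℕ, 1 ≤ M ∧ r + j * (m - 1) = q * M := by
  obtain ⟨c, hc⟩ := h
  have hb := Nat.gcd_eq_gcd_ab (m - 1) q
  set a := Nat.gcdA (m - 1) q
  set b := Nat.gcdB (m - 1) q
  have hq0 : (q : ℤ) ≠ 0 := by exact_mod_cast (by omega : q ≠ 0)
  set j : ℕ := ((-a * c) % q).toNat with hj
  have hj' : (j : ℤ) = (-a * c) % q := Int.toNat_of_nonneg (Int.emod_nonneg _ hq0)
  have hdvd : q ∣ r + j * (m - 1) := by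
    zify
    rw [hj', Int.emod_def, hc]
    push_cast
    rw [hb]
    exact ⟨b * c - (-a * c / q) * (m - 1 : ℕ), by ring⟩
  obtain ⟨M, hM⟩ := hdvd
  refine ⟨j, M, ?_, hM⟩
  rcases Nat.eq_zero_or_pos M with h | h
  · subst h; simp at hM; omega
  · exact h

/-- Cut points indexed by `ℤ`, invariant under the translation by `r` with `N` intervals per
period, obtained by repeating the intervals of `exists_lengths` periodically. -/
lemma exists_cut_points {m r N : ℕ} (hN : 1 ≤ N) (hm : 2 ≤ m) {L : ℕ → ℤ}
    (hL : ∑ i ∈ Finset.range N, (m : ℝ) ^ L i = r) :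
    ∃ (p : ℤ → ℝ) (s : ℤ → ℤ), p 0 = 0 ∧ (∀ k, p (k + 1) = p k + (m : ℝ) ^ s k) ∧
      (∀ k, p (k + N) = p k + r) ∧ (∀ k, s (k + N) = s k) ∧ ∀ k, p k ∈ zInvSubring m hm := by
  have hN0 : (N : ℤ) ≠ 0 := by omega
  refine ⟨fun k => (k / N : ℤ) * r + ∑ i ∈ Finset.range (k % N).toNat, (m : ℝ) ^ L i,
    fun k => L (k % N).toNat, by simp, fun k => ?_, fun k => ?_, fun k => by simp, fun k => ?_⟩
  · have h0 := Int.emod_nonneg k hN0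
    have h1 := Int.emod_lt_of_pos k (by omega : (0 : ℤ) < N)
    have h2 := Int.mul_ediv_add_emod k N
    rcases lt_or_ge (k % N + 1) N with h | h
    · obtain ⟨e1, e2⟩ := (Int.ediv_emod_unique (a := k + 1) (b := N) (r := k % N + 1)
        (q := k / N) (by omega)).2 ⟨by linarith, by omega, h⟩
      simp only [e1, e2, Int.toNat_add h0 zero_le_one, Int.toNat_one, Finset.sum_range_succ]
      ring
    · obtain ⟨e1, e2⟩ := (Int.ediv_emod_unique (a := k + 1) (b := N) (r := 0)
        (q := k / N + 1) (by omega)).2 ⟨by linarith, by omega, by omega⟩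
      have e3 : N = (k % N).toNat + 1 := by omega
      have hL' := hL
      rw [e3, Finset.sum_range_succ] at hL'
      simp only [e1, e2, Int.toNat_zero, Finset.sum_range_zero]
      push_cast
      linarith
  · simp only [Int.add_emod_right]
    rw [Int.add_ediv_of_dvd_right (dvd_refl _), Int.ediv_self hN0]
    push_cast
    ring
  · exact add_mem (mul_mem (intCast_mem _ _) (natCast_mem _ _))
      (sum_mem fun i _ => zpow_mem_zInvSubring hm _)

theorem exists_order_of_gcd_dvd {m r q : ℕ} (hm : 2 ≤ m) (hr : 1 ≤ r) (hq : 1 ≤ q)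
    (h : Nat.gcd (m - 1) q ∣ r) :
    ∃ f : Equiv.Perm (AddCircle (r : ℝ)), InT r m f ∧ orderOf f = q := by
  have hr0 : (0 : ℝ) < r := by positivity
  have hm0 : (0 : ℝ) < m := by positivity
  obtain ⟨j, M, hM, hj⟩ := exists_multiple hr hq h
  obtain ⟨L, hL⟩ := exists_lengths hm hr j
  rw [hj] at hL
  obtain ⟨p, s, hp0, hps, hpN, hsN, hpZ⟩ := exists_cut_points (Nat.mul_pos hq hM) hm hL
  have hmono : StrictMono p := strictMono_int_of_lt_succ fun k => by
    rw [hps]; exact lt_add_of_pos_right _ (zpow_pos hm0 _)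
  have hpNk : ∀ t : ℤ, p (t * (q * M : ℕ)) = t * r := by
    intro t
    induction t with
    | zero => simp [hp0]
    | succ i ih => rw [add_mul, one_mul, hpN, ih]; push_cast; ring
    | pred i ih =>
      have := hpN ((-(i : ℤ) - 1) * (q * M : ℕ))
      rw [show (-(i : ℤ) - 1) * (q * M : ℕ) + (q * M : ℕ) = -(i : ℤ) * (q * M : ℕ) by ring,
        ih] at this
      push_cast at *
      linarith
  have hex : ∀ x : ℝ, ∃ k : ℤ, p k ≤ x ∧ x < p (k + 1) := by
    intro x
    obtain ⟨k, hk, hk'⟩ := Int.exists_greatest_of_bdd (P := fun k => p k ≤ x)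
      ⟨(⌊x / r⌋ + 1) * (q * M : ℕ), fun z hz => by
        by_contra! hlt
        have h1 := hmono hlt
        rw [hpNk] at h1
        have := (div_lt_iff₀ hr0).1 (Int.lt_floor_add_one (x / r))
        push_cast at h1
        linarith⟩
      ⟨⌊x / r⌋ * (q * M : ℕ), by
        rw [hpNk]; exact (le_div_iff₀ hr0).1 (Int.floor_le _)⟩
    refine ⟨k, hk, ?_⟩
    by_contra! hlt
    have := hk' _ hlt
    omega
  choose κ hκ hκ' using hex
  have huniq : ∀ {x k}, p k ≤ x → x < p (k + 1) → κ x = k := by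
    intro x k h1 h2
    have e1 := hmono.lt_iff_lt.1 ((hκ x).trans_lt h2)
    have e2 := hmono.lt_iff_lt.1 (h1.trans_lt (hκ' x))
    omega
  -- `A t k` maps `[p k, p (k + 1)]` affinely onto `[p (k + t), p (k + t + 1)]`.
  set A : ℤ → ℤ → ℝ → ℝ := fun t k x => p (k + t) + (m : ℝ) ^ (s (k + t) - s k) * (x - p k)
    with hA
  have hAend : ∀ t k, A t k (p (k + 1)) = p (k + t + 1) := by
    intro t k
    simp only [hA]
    rw [hps k, hps (k + t), add_sub_cancel_left, ← zpow_add₀ hm0.ne', sub_add_cancel]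
  have hAst : ∀ t k, A t k (p k) = p (k + t) := by intro t k; simp [hA]
  have hAmono : ∀ t k, StrictMono (A t k) := by
    intro t k x y hxy
    have : (0 : ℝ) < (m : ℝ) ^ (s (k + t) - s k) := zpow_pos hm0 _
    simp only [hA]
    nlinarith
  have hAcomp : ∀ t u k x, A t (k + u) (A u k x) = A (u + t) k x := by
    intro t u k x
    simp only [hA]
    rw [add_sub_cancel_left, ← mul_assoc, ← zpow_add₀ hm0.ne', sub_add_sub_cancel, add_assoc]
  set F : ℝ → ℝ := fun x => A M (κ x) x with hF
  have hFk : ∀ {x k}, p k ≤ x → x < p (k + 1) → F x = A M k x := by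
    intro x k h1 h2; simp only [hF, huniq h1 h2]
  have hFp : ∀ k, F (p k) = p (k + M) := by
    intro k
    rw [hFk le_rfl (hmono (by omega)), hAst]
  have hFk' : ∀ {x k}, p k ≤ x → x ≤ p (k + 1) → F x = A M k x := by
    intro x k h1 h2
    rcases h2.lt_or_eq with h2 | rfl
    · exact hFk h1 h2
    · rw [hFp, hAend]; congr 1; ring
  have hFmono : StrictMono F := by
    intro x y hxy
    have hle : κ x < κ y + 1 := hmono.lt_iff_lt.1 ((hκ x).trans_lt (hxy.trans (hκ' y)))
    rcases (Int.lt_add_one_iff.1 hle).lt_or_eq with hlt | heq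
    · calc F x < A M (κ x) (p (κ x + 1)) := hAmono _ _ (hκ' x)
        _ = p (κ x + M + 1) := hAend _ _
        _ ≤ p (κ y + M) := hmono.monotone (by omega)
        _ = A M (κ y) (p (κ y)) := (hAst _ _).symm
        _ ≤ F y := (hAmono _ _).monotone (hκ y)
    · simp only [hF, heq]
      exact hAmono _ _ hxy
  have hFper : ∀ x, F (x + r) = F x + r := by
    intro x
    have e : F (x + r) = A M (κ x + (q * M : ℕ)) (x + r) := by
      refine hFk ?_ ?_
      · rw [hpN]; linarith [hκ x]
      · rw [add_right_comm, hpN]; linarith [hκ' x]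
    rw [e]
    simp only [hF, hA]
    rw [add_right_comm, hpN, hpN, hsN, hsN]
    ring
  have hFit : ∀ n x, F^[n] x = A ((n * M : ℕ) : ℤ) (κ x) x := by
    intro n x
    induction n with
    | zero => simp [hA]
    | succ n ih =>
      rw [Function.iterate_succ_apply', ih]
      rw [hFk (k := κ x + (n * M : ℕ)), hAcomp]
      · congr 1; push_cast; ring
      · rw [← hAst]; exact (hAmono _ _).monotone (hκ x)
      · rw [← hAend]; exact hAmono _ _ (hκ' x)
  have hFq : ∀ x, F^[q] x = x + r := by
    intro x
    rw [hFit]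
    simp only [hA]
    rw [hpN, hsN, sub_self, zpow_zero]
    ring
  have hF0 : ∀ n : ℕ, F^[n] 0 = p (n * M : ℕ) := by
    intro n
    rw [hFit, huniq (k := 0) hp0.le (by rw [← hp0]; exact hmono (by omega))]
    have := hAst (n * M : ℕ) 0
    rwa [hp0, zero_add] at this
  -- the induced map of the circle is invertible because its `q`-th iterate is the identity
  have hgper : Function.Periodic (fun x => (F x : AddCircle (r : ℝ))) r := fun x => by
    simp [hFper]
  set g : AddCircle (r : ℝ) → AddCircle (r : ℝ) := hgper.lift with hg
  have hgF : ∀ x : ℝ, g x = F x := fun x => hgper.lift_coe x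
  have hgit : ∀ (n : ℕ) (x : ℝ), g^[n] x = (F^[n] x : ℝ) := by
    intro n x
    induction n with
    | zero => rfl
    | succ n ih => rw [Function.iterate_succ_apply', ih, hgF, Function.iterate_succ_apply']
  have hgq : g^[q] = id := by
    funext y
    induction y using QuotientAddGroup.induction_on with
    | H x =>
      refine (hgit q x).trans ?_
      rw [hFq]
      simp
  have hbij : Function.Bijective g := by
    obtain ⟨q', rfl⟩ : ∃ q', q = q' + 1 := ⟨q - 1, by omega⟩
    refine ⟨Function.LeftInverse.injective (g := g^[q']) fun y => ?_,
      Function.RightInverse.surjective (g := g^[q']) fun y => ?_⟩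
    · rw [← Function.iterate_succ_apply, hgq]; rfl
    · rw [← Function.iterate_succ_apply' g, hgq]; rfl
  set f : Equiv.Perm (AddCircle (r : ℝ)) := Equiv.ofBijective g hbij with hf
  have hfF : ∀ x : ℝ, f x = F x := hgF
  refine ⟨f, ⟨F, ⟨hFmono, hFper, q * M, fun i => p (i : ℕ), ?_, ?_, ?_, ?_, ?_, ?_⟩, hfF⟩, ?_⟩
  · intro i i' hi
    exact hmono (by exact_mod_cast hi)
  · simpa using hp0
  · have := hpN 0
    rw [hp0, zero_add, zero_add] at this
    simpa using this
  · exact fun i => hpZ _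
  · intro i
    rw [hFp]
    exact hpZ _
  · intro i
    refine ⟨s ((i : ℕ) + M) - s (i : ℕ),
      p ((i : ℕ) + M) - (m : ℝ) ^ (s ((i : ℕ) + M) - s (i : ℕ)) * p (i : ℕ), ?_⟩
    rintro x ⟨h1, h2⟩
    simp only [Fin.val_castSucc, Fin.val_succ] at h1 h2
    push_cast at h2
    rw [hFk' h1 h2]
    simp only [hA]
    ring
  · rw [orderOf_eq_iff hq]
    constructor
    · ext y
      induction y using QuotientAddGroup.induction_on with
      | H x =>
        refine (pow_apply_coe hfF q x).trans ?_
        rw [hFq]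
        simp
    · intro n hn hn0 hone
      have h1 := pow_apply_coe hfF n 0
      rw [hone, hF0, Equiv.Perm.one_apply] at h1
      have hlo : p 0 < p (n * M : ℕ) := hmono (by exact_mod_cast Nat.mul_pos hn0 hM)
      have hhi : p (n * M : ℕ) < p (0 + (q * M : ℕ)) := hmono (by
        rw [zero_add]; exact_mod_cast Nat.mul_lt_mul_of_pos_right hn hM)
      rw [hpN, hp0, zero_add] at hhi
      rw [hp0] at hlo
      obtain ⟨t, ht⟩ := coe_eq_coe_iff_exists.1 h1
      rw [zero_add] at ht
      rw [ht] at hlo hhi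
      have ht0 : 0 < t := by
        have := pos_of_mul_pos_left hlo hr0.le
        exact_mod_cast this
      have ht1 : t < 1 := by
        have : (t : ℝ) * r < 1 * r := by linarith
        exact_mod_cast lt_of_mul_lt_mul_right this hr0.le
      omega

/-- `T_{r,m}` contains an element of order `q` if and only if `gcd(m-1, q)` divides `r`. -/
theorem exists_order_q_iff_gcd_dvd (m r q : ℕ) (hm : 2 ≤ m) (hr : 1 ≤ r) (hq : 1 ≤ q) :
    (∃ f : Equiv.Perm (AddCircle (r : ℝ)), InT r m f ∧ orderOf f = q) ↔
      Nat.gcd (m - 1) q ∣ r := by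
  constructor
  · rintro ⟨f, hf, rfl⟩
    exact gcd_dvd_of_order hm hr hf hq
  · exact exists_order_of_gcd_dvd hm hr hq
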